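/- Let h ≥ 3 and k ≥ 3h+3 be positive integers, and let A = [0,k+1] \ {x, x+2} where x ∈ [1,k-2]. Then: (i) if x ∈ [1,h-2], then |h^∧A| = hk - h² + 2x + 2; (ii) if x ∈ [k-h+1,k-2], then |h^∧A| = (h+2)k - h² - 2x; (iii) if x ∈ {h-1, k-h}, then |h^∧A| = hk - h² + 2h - 1; (iv) if x ∈ {h, k-h-1}, then |h^∧A| = hk - h² + 2h; (v) if x ∈ [h+1,k-h-2], then |h^∧A| = hk - h² + 2h + 1. -/

import Mathlib

open Finset

/-- The restricted `h`-fold sumset: all sums of `h` pairwise distinct elements of `A`. -/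
def restrictedSumset (h : ℕ) (A : Finset ℤ) : Finset ℤ :=
  (A.powersetCard h).image fun S => S.sum id

theorem rs_mem (h : ℕ) (A : Finset ℤ) (s : ℤ) :
    s ∈ restrictedSumset h A ↔ ∃ S ⊆ A, S.card = h ∧ ∑ i ∈ S, i = s := by
  simp [restrictedSumset, Finset.mem_powersetCard, and_assoc]

theorem rs_move {h : ℕ} {A S : Finset ℤ} (hS : S ⊆ A) (hc : S.card = h) {p p' : ℤ}
    (hp : p ∈ S) (hp' : p' ∈ A) (hn : p' ∉ S) :
    ∃ T ⊆ A, T.card = h ∧ (∑ i ∈ T, i = ∑ i ∈ S, i - p + p') ∧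
      ∀ y, y ∈ T ↔ (y = p' ∨ (y ≠ p ∧ y ∈ S)) := by
  have hn' : p' ∉ S.erase p := fun H => hn (Finset.mem_of_mem_erase H)
  refine ⟨insert p' (S.erase p), ?_, ?_, ?_, ?_⟩
  · intro y hy
    rcases Finset.mem_insert.1 hy with rfl | hy
    · exact hp'
    · exact hS (Finset.mem_of_mem_erase hy)
  · rw [Finset.card_insert_of_notMem hn', Finset.card_erase_of_mem hp, hc]
    have : 0 < S.card := Finset.card_pos.2 ⟨p, hp⟩
    omega
  · rw [Finset.sum_insert hn']
    have := Finset.add_sum_erase S (fun i => i) hp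
    try simp only at this
    linarith
  · intro y; simp [Finset.mem_insert, Finset.mem_erase]

theorem rs_move_one {h : ℕ} {A S : Finset ℤ} (hS : S ⊆ A) (hc : S.card = h) {p p' : ℤ}
    (hp : p ∈ S) (hp' : p' ∈ A) (hn : p' ∉ S) (s : ℤ) (hs : s = ∑ i ∈ S, i - p + p') :
    s ∈ restrictedSumset h A := by
  obtain ⟨T, h1, h2, h3, _⟩ := rs_move hS hc hp hp' hn
  exact (rs_mem _ _ _).2 ⟨T, h1, h2, by rw [h3, hs]⟩

theorem rs_move_two {h : ℕ} {A S : Finset ℤ} (hS : S ⊆ A) (hc : S.card = h) {p p' q q' : ℤ}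
    (hp : p ∈ S) (hp' : p' ∈ A) (hn : p' ∉ S)
    (hq : q ∈ S) (hq' : q' ∈ A) (hm : q' ∉ S) (hpq : p ≠ q) (hpq' : p' ≠ q') (s : ℤ)
    (hs : s = ∑ i ∈ S, i - p + p' - q + q') :
    s ∈ restrictedSumset h A := by
  obtain ⟨T, h1, h2, h3, h4⟩ := rs_move hS hc hp hp' hn
  refine rs_move_one h1 h2 (p := q) (p' := q') ?_ hq' ?_ s (by rw [hs, h3])
  · rw [h4]; exact Or.inr ⟨hpq.symm, hq⟩
  · rw [h4]; rintro (H | H)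
    · exact hpq' H.symm
    · exact hm H.2

/-- If everything outside `M` is at least `c` and `M` is bounded by `c`, then `M` has minimal sum. -/
theorem sum_min {A M S : Finset ℤ} (hc : S.card = M.card) (hS : S ⊆ A) (c : ℤ)
    (h1 : ∀ y ∈ M, y ≤ c) (h2 : ∀ y ∈ A, y ∉ M → c ≤ y) : ∑ i ∈ M, i ≤ ∑ i ∈ S, i := by
  have e : (S \ M).card = (M \ S).card := Finset.card_sdiff_comm hc
  have a1 := Finset.sum_inter_add_sum_sdiff S M (fun i => i)
  have a2 := Finset.sum_inter_add_sum_sdiff M S (fun i => i)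
  rw [Finset.inter_comm] at a2
  have b1 : (S \ M).card • c ≤ ∑ i ∈ S \ M, i :=
    Finset.card_nsmul_le_sum _ _ _ fun y hy => by
      rw [Finset.mem_sdiff] at hy; exact h2 y (hS hy.1) hy.2
  have b2 : ∑ i ∈ M \ S, i ≤ (M \ S).card • c :=
    Finset.sum_le_card_nsmul _ _ _ fun y hy => by
      rw [Finset.mem_sdiff] at hy; exact h1 y hy.1
  rw [e] at b1
  linarith

theorem sum_max {A M S : Finset ℤ} (hc : S.card = M.card) (hS : S ⊆ A) (c : ℤ)
    (h1 : ∀ y ∈ M, c ≤ y) (h2 : ∀ y ∈ A, y ∉ M → y ≤ c) : ∑ i ∈ S, i ≤ ∑ i ∈ M, i := by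
  have e : (S \ M).card = (M \ S).card := Finset.card_sdiff_comm hc
  have a1 := Finset.sum_inter_add_sum_sdiff S M (fun i => i)
  have a2 := Finset.sum_inter_add_sum_sdiff M S (fun i => i)
  rw [Finset.inter_comm] at a2
  have b1 : ∑ i ∈ S \ M, i ≤ (S \ M).card • c :=
    Finset.sum_le_card_nsmul _ _ _ fun y hy => by
      rw [Finset.mem_sdiff] at hy; exact h2 y (hS hy.1) hy.2
  have b2 : (M \ S).card • c ≤ ∑ i ∈ M \ S, i :=
    Finset.card_nsmul_le_sum _ _ _ fun y hy => by
      rw [Finset.mem_sdiff] at hy; exact h1 y hy.1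
  rw [e] at b1
  linarith

theorem rs_gauss (a : ℤ) (n : ℕ) : 2 * ∑ i ∈ Finset.Ico a (a + n), i = n * (2 * a + n - 1) := by
  induction n with
  | zero => simp
  | succ n ih =>
    have : Finset.Ico a (a + (n + 1 : ℕ)) = insert (a + n) (Finset.Ico a (a + n)) := by
      ext y; simp only [Finset.mem_Ico, Finset.mem_insert]; push_cast; omega
    rw [this, Finset.sum_insert (by simp), mul_add, ih]
    push_cast; ring

/-- The ambient set. -/
noncomputable def AA (k : ℕ) (x : ℤ) : Finset ℤ := Finset.Icc (0 : ℤ) ((k : ℤ) + 1) \ {x, x + 2}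

theorem mem_AA (k : ℕ) (x y : ℤ) :
    y ∈ AA k x ↔ (0 ≤ y ∧ y ≤ k + 1) ∧ y ≠ x ∧ y ≠ x + 2 := by
  simp [AA]

/-- upward closure along an interval -/
theorem up_closed {S : Finset ℤ} {a b : ℤ} (hstep : ∀ y ∈ S, a ≤ y → y < b → y + 1 ∈ S)
    (u : ℤ) (hu : u ∈ S) (hau : a ≤ u) : ∀ y, u ≤ y → y ≤ b → y ∈ S := by
  intro y hy
  induction y, hy using Int.leInduction with
  | base => intro _; exact hu
  | succ n hn ih => intro hb; exact hstep n (ih (by omega)) (by omega) (by omega)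

theorem top_card (k h : ℕ) : (Finset.Ico ((k : ℤ) + 2 - h) (k + 2 - h + h)).card = h := by simp

theorem step (h k : ℕ) (hh : 3 ≤ h) (hk : 3 * h + 3 ≤ k) (x : ℤ) (hx1 : 1 ≤ x)
    (hx2 : 2 * x ≤ k - 1) (S : Finset ℤ) (hS : S ⊆ AA k x) (hc : S.card = h)
    (hlt : S ≠ Finset.Ico ((k : ℤ) + 2 - h) (k + 2 - h + h)) :
    (∑ i ∈ S, i + 1 ∈ restrictedSumset h (AA k x)) ∨
    (x = h - 1 ∧ S = insert (x + 1) (Finset.Ico 0 x)) ∨ (x = h ∧ S = Finset.Ico 0 x) := by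
  by_cases hst : ∃ y ∈ S, y + 1 ∈ AA k x ∧ y + 1 ∉ S
  · obtain ⟨y, h1, h2, h3⟩ := hst
    exact Or.inl (rs_move_one hS hc h1 h2 h3 _ (by ring))
  push Not at hst
  have hA : ∀ y ∈ S, (0 ≤ y ∧ y ≤ k + 1) ∧ y ≠ x ∧ y ≠ x + 2 :=
    fun y hy => (mem_AA k x y).1 (hS hy)
  have up1 := up_closed (S := S) (a := x + 3) (b := k + 1) fun y hy h1 h2 =>
    hst y hy ((mem_AA _ _ _).2 (by omega))
  have up2 := up_closed (S := S) (a := 0) (b := x - 1) fun y hy h1 h2 =>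
    hst y hy ((mem_AA _ _ _).2 (by omega))
  have hne : S.Nonempty := Finset.card_pos.1 (by omega)
  by_cases hU : (S.filter (fun y => x + 3 ≤ y)).Nonempty
  · left
    obtain ⟨hu1, hu2⟩ := Finset.mem_filter.1 (Finset.min'_mem _ hU)
    have humin : ∀ y ∈ S, x + 3 ≤ y → (S.filter (fun y => x + 3 ≤ y)).min' hU ≤ y :=
      fun y hy h1 => Finset.min'_le _ _ (Finset.mem_filter.2 ⟨hy, h1⟩)
    generalize (S.filter (fun y => x + 3 ≤ y)).min' hU = u at *
    have hsub : Finset.Icc u (k + 1 : ℤ) ⊆ S := fun y hy => by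
      rw [Finset.mem_Icc] at hy; exact up1 u hu1 hu2 y hy.1 hy.2
    have hcc := Finset.card_le_card hsub
    rw [Int.card_Icc, hc] at hcc
    have huk := (hA u hu1).1.2
    have hu5 : x + 5 ≤ u := by omega
    have hun : u - 1 ∉ S := fun H => by have := humin _ H (by omega); omega
    have huA : u - 1 ∈ AA k x := (mem_AA _ _ _).2 (by omega)
    by_cases hx : x + 1 ∈ S
    · exact rs_move_two hS hc hx (p' := x + 3) ((mem_AA _ _ _).2 (by omega))
        (fun H => by have := humin _ H (by omega); omega) hu1 huA hun (by omega) (by omega) _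
        (by ring)
    · by_cases hx' : x - 1 ∈ S
      · exact rs_move_two hS hc hx' (p' := x + 1) ((mem_AA _ _ _).2 (by omega))
          hx hu1 huA hun (by omega) (by omega) _ (by ring)
      · exfalso
        have : S = Finset.Icc u (k + 1 : ℤ) := by
          refine Finset.Subset.antisymm (fun y hy => ?_) hsub
          have h1 := hA y hy
          have h2 := humin y hy
          have h3 : ¬ y ≤ x - 1 := fun H => hx' (up2 y hy h1.1.1 _ H le_rfl)
          have h4 : y ≠ x + 1 := fun H => hx (H ▸ hy)
          rw [Finset.mem_Icc]; omega
        apply hlt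
        rw [this, Int.card_Icc] at hc
        rw [this]; ext y; simp only [Finset.mem_Icc, Finset.mem_Ico]; omega
  · have hU' : ∀ y ∈ S, y < x + 3 := fun y hy => by
      by_contra H
      exact hU ⟨y, Finset.mem_filter.2 ⟨hy, by omega⟩⟩
    have hm1 := Finset.min'_mem S hne
    have hm2 : ∀ y ∈ S, S.min' hne ≤ y := fun y hy => Finset.min'_le _ _ hy
    generalize S.min' hne = m at *
    have hmA := hA m hm1
    have hmn : m - 1 ∉ S := fun H => by have := hm2 _ H; omega
    by_cases hx : x + 1 ∈ S
    · by_cases hmx : m = x + 1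
      · have : S ⊆ {x + 1} := fun y hy => by
          have := hm2 y hy; have := hA y hy; have := hU' y hy
          rw [Finset.mem_singleton]; omega
        have := Finset.card_le_card this
        simp at this; omega
      have := hm2 _ hx
      by_cases hm0 : m = 0
      · right; left
        have e : S = insert (x + 1) (Finset.Ico 0 x) := by
          ext y; simp only [Finset.mem_insert, Finset.mem_Ico]
          constructor
          · intro hy
            have := hA y hy; have := hU' y hy; omega
          · rintro (rfl | H)
            · exact hx
            · exact up2 m hm1 (by omega) y (by omega) (by omega)
        refine ⟨?_, e⟩
        rw [e, Finset.card_insert_of_notMem (by simp), Int.card_Ico] at hc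
        omega
      · left
        exact rs_move_two hS hc hx (p' := x + 3) ((mem_AA _ _ _).2 (by omega))
          (fun H => by have := hU' _ H; omega) hm1 (q' := m - 1) ((mem_AA _ _ _).2 (by omega)) hmn
          (by omega) (by omega) _ (by ring)
    · have hall : ∀ y ∈ S, y ≤ x - 1 := fun y hy => by
        have := hA y hy; have := hU' y hy
        have h4 : y ≠ x + 1 := fun H => hx (H ▸ hy)
        omega
      have hmx := hall m hm1
      have hx1S : x - 1 ∈ S := up2 m hm1 (by omega) _ hmx le_rfl
      by_cases hmx : m = x - 1
      · have : S ⊆ {x - 1} := fun y hy => by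
          have := hm2 y hy; have := hall y hy
          rw [Finset.mem_singleton]; omega
        have := Finset.card_le_card this
        simp at this; omega
      by_cases hm0 : m = 0
      · right; right
        have e : S = Finset.Ico 0 x := by
          ext y; simp only [Finset.mem_Ico]
          constructor
          · intro hy
            have := hA y hy; have := hall y hy; omega
          · intro H
            exact up2 m hm1 (by omega) y (by omega) (by omega)
        refine ⟨?_, e⟩
        rw [e, Int.card_Ico] at hc
        omega
      · left
        exact rs_move_two hS hc hx1S (p' := x + 1) ((mem_AA _ _ _).2 (by omega))
          hx hm1 (q' := m - 1) ((mem_AA _ _ _).2 (by omega)) hmn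
          (by omega) (by omega) _ (by ring)

theorem top_sub (h k : ℕ) (hk : 3 * h + 3 ≤ k) (x : ℤ) (hx1 : 1 ≤ x)
    (hx2 : 2 * x ≤ k - 1) : Finset.Ico ((k : ℤ) + 2 - h) (k + 2 - h + h) ⊆ AA k x := by
  intro y hy
  rw [Finset.mem_Ico] at hy
  rw [mem_AA]; omega

theorem rs_le_top (h k : ℕ) (x : ℤ) (s : ℤ) (hs : s ∈ restrictedSumset h (AA k x)) :
    s ≤ ∑ i ∈ Finset.Ico ((k : ℤ) + 2 - h) (k + 2 - h + h), i := by
  obtain ⟨S, h1, h2, rfl⟩ := (rs_mem _ _ _).1 hs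
  refine sum_max (A := AA k x) (by rw [h2, top_card]) h1 (k + 2 - h) ?_ ?_
  · intro y hy; rw [Finset.mem_Ico] at hy; omega
  · intro y hy hn; rw [mem_AA] at hy; rw [Finset.mem_Ico] at hn; omega

theorem rs_min_le (h k : ℕ) (x : ℤ) (M : Finset ℤ) (hM : M.card = h) (c : ℤ)
    (h1 : ∀ y ∈ M, y ≤ c) (h2 : ∀ y ∈ AA k x, y ∉ M → c ≤ y)
    (s : ℤ) (hs : s ∈ restrictedSumset h (AA k x)) : ∑ i ∈ M, i ≤ s := by
  obtain ⟨S, h3, h4, rfl⟩ := (rs_mem _ _ _).1 hs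
  exact sum_min (by rw [h4, hM]) h3 c h1 h2

/-- Cardinality if no exception. -/
theorem card_plain (h k : ℕ) (hh : 3 ≤ h) (hk : 3 * h + 3 ≤ k) (x : ℤ) (hx1 : 1 ≤ x)
    (hx2 : 2 * x ≤ k - 1) (he1 : x ≠ h - 1) (he2 : x ≠ h) (M : Finset ℤ) (hMA : M ⊆ AA k x)
    (hM : M.card = h) (c : ℤ)
    (h1 : ∀ y ∈ M, y ≤ c) (h2 : ∀ y ∈ AA k x, y ∉ M → c ≤ y) :
    ((restrictedSumset h (AA k x)).card : ℤ) =
      ∑ i ∈ Finset.Ico ((k : ℤ) + 2 - h) (k + 2 - h + h), i + 1 - ∑ i ∈ M, i := by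
  have key : restrictedSumset h (AA k x) = Finset.Icc (∑ i ∈ M, i)
      (∑ i ∈ Finset.Ico ((k : ℤ) + 2 - h) (k + 2 - h + h), i) := by
    ext s
    rw [Finset.mem_Icc]
    constructor
    · intro hs
      exact ⟨rs_min_le h k x M hM c h1 h2 s hs, rs_le_top h k x s hs⟩
    · rintro ⟨hs, hs'⟩
      induction s, hs using Int.leInduction with
      | base => exact (rs_mem _ _ _).2 ⟨M, hMA, hM, rfl⟩
      | succ n hn ih =>
        obtain ⟨S, h3, h4, rfl⟩ := (rs_mem _ _ _).1 (ih (by omega))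
        rcases step h k hh hk x hx1 hx2 S h3 h4 (by rintro rfl; omega) with H | H | H
        · exact H
        · exact absurd H.1 he1
        · exact absurd H.1 he2
  have hle := rs_le_top h k x _ ((rs_mem _ _ _).2 ⟨M, hMA, hM, rfl⟩)
  rw [key, Int.card_Icc]
  omega

/-- Cardinality in the exceptional cases. -/
theorem card_exc (h k : ℕ) (hh : 3 ≤ h) (hk : 3 * h + 3 ≤ k) (x : ℤ) (hx1 : 1 ≤ x)
    (hx2 : 2 * x ≤ k - 1) (M : Finset ℤ) (hMA : M ⊆ AA k x)
    (hM : M.card = h) (c : ℤ)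
    (he1 : x = h - 1 → insert (x + 1) (Finset.Ico 0 x) = M) (he2 : x = h → Finset.Ico 0 x = M)
    (hcM : c ∈ M) (hcA : c + 2 ∈ AA k x)
    (h1 : ∀ y ∈ M, y ≤ c) (h2 : ∀ y ∈ AA k x, y ∉ M → c + 2 ≤ y) :
    ((restrictedSumset h (AA k x)).card : ℤ) =
      ∑ i ∈ Finset.Ico ((k : ℤ) + 2 - h) (k + 2 - h + h), i - ∑ i ∈ M, i := by
  have hcn : c + 2 ∉ M := fun H => by have := h1 _ H; omega
  have hM2 : ∑ i ∈ M, i + 2 ∈ restrictedSumset h (AA k x) :=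
    rs_move_one hMA hM hcM hcA hcn _ (by ring)
  have hM0 : ∑ i ∈ M, i ∈ restrictedSumset h (AA k x) := (rs_mem _ _ _).2 ⟨M, hMA, hM, rfl⟩
  have hgap : ∀ S ⊆ AA k x, S.card = h → S ≠ M → ∑ i ∈ M, i + 2 ≤ ∑ i ∈ S, i := by
    intro S hS hSc hne
    have : ∃ y ∈ S, y ∉ M := by
      by_contra H
      push Not at H
      exact hne (Finset.eq_of_subset_of_card_le H (by omega))
    obtain ⟨y, hy, hyM⟩ := this
    have : ∃ z ∈ M, z ∉ S := by
      by_contra H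
      push Not at H
      exact hne (Finset.eq_of_subset_of_card_le H (by omega)).symm
    obtain ⟨z, hz, hzS⟩ := this
    obtain ⟨T, t1, t2, t3, -⟩ := rs_move hS hSc hy (hMA hz) hzS
    have := sum_min (M := M) (by rw [t2, hM]) t1 c h1 (fun y hy hn => by have := h2 y hy hn; omega)
    have := h1 z hz
    have := h2 y (hS hy) hyM
    omega
  have key : restrictedSumset h (AA k x) = (Finset.Icc (∑ i ∈ M, i)
      (∑ i ∈ Finset.Ico ((k : ℤ) + 2 - h) (k + 2 - h + h), i)).erase (∑ i ∈ M, i + 1) := by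
    ext s
    rw [Finset.mem_erase, Finset.mem_Icc]
    constructor
    · intro hs
      refine ⟨?_, rs_min_le h k x M hM c h1 (fun y hy hn => by have := h2 y hy hn; omega) s hs,
        rs_le_top h k x s hs⟩
      obtain ⟨S, h3, h4, rfl⟩ := (rs_mem _ _ _).1 hs
      by_cases hSM : S = M
      · subst hSM; omega
      · have := hgap S h3 h4 hSM; omega
    · rintro ⟨hs1, hs, hs'⟩
      by_cases hs0 : s = ∑ i ∈ M, i
      · rw [hs0]; exact hM0
      have hs2 : ∑ i ∈ M, i + 2 ≤ s := by omega
      clear hs1 hs hs0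
      induction s, hs2 using Int.leInduction with
      | base => exact hM2
      | succ n hn ih =>
        obtain ⟨S, h3, h4, rfl⟩ := (rs_mem _ _ _).1 (ih (by omega))
        rcases step h k hh hk x hx1 hx2 S h3 h4 (by rintro rfl; omega) with H | H | H
        · exact H
        · have := H.2.trans (he1 H.1); subst this; omega
        · have := H.2.trans (he2 H.1); subst this; omega
  have hle := rs_le_top h k x _ hM2
  rw [key, Finset.card_erase_of_mem (by rw [Finset.mem_Icc]; omega), Int.card_Icc]
  omega

theorem half (h k : ℕ) (hh : 3 ≤ h) (hk : 3 * h + 3 ≤ k) (x : ℤ) (hx1 : 1 ≤ x)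
    (hx2 : 2 * x ≤ k - 1) :
    (x ≤ h - 2 →
      ((restrictedSumset h (AA k x)).card : ℤ) = (h : ℤ) * k - (h : ℤ) ^ 2 + 2 * x + 2) ∧
    (x = (h : ℤ) - 1 →
      ((restrictedSumset h (AA k x)).card : ℤ) = (h : ℤ) * k - (h : ℤ) ^ 2 + 2 * h - 1) ∧
    (x = (h : ℤ) →
      ((restrictedSumset h (AA k x)).card : ℤ) = (h : ℤ) * k - (h : ℤ) ^ 2 + 2 * h) ∧
    ((h : ℤ) + 1 ≤ x →
      ((restrictedSumset h (AA k x)).card : ℤ) = (h : ℤ) * k - (h : ℤ) ^ 2 + 2 * h + 1) := by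
  have gtop := rs_gauss ((k : ℤ) + 2 - h) h
  have g0 := rs_gauss 0 h
  rw [zero_add] at g0
  refine ⟨fun H => ?_, fun H => ?_, fun H => ?_, fun H => ?_⟩
  · have g := rs_gauss 0 (h + 2)
    rw [zero_add] at g
    have m1 : x + 2 ∈ Finset.Ico (0 : ℤ) (h + 2 : ℕ) := by
      rw [Finset.mem_Ico]; push_cast; omega
    have m2 : x ∈ (Finset.Ico (0 : ℤ) (h + 2 : ℕ)).erase (x + 2) := by
      rw [Finset.mem_erase, Finset.mem_Ico]; push_cast; omega
    have e1 := Finset.add_sum_erase _ (fun i => i) m1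
    have e2 := Finset.add_sum_erase _ (fun i => i) m2
    try simp only at e1 e2
    rw [card_plain h k hh hk x hx1 hx2 (by omega) (by omega)
      (((Finset.Ico (0 : ℤ) (h + 2 : ℕ)).erase (x + 2)).erase x) ?_ ?_ (h + 1) ?_ ?_]
    · push_cast at g gtop e1 e2 ⊢
      linarith
    · intro y hy
      simp only [Finset.mem_erase, Finset.mem_Ico] at hy
      rw [mem_AA]; push_cast at hy; omega
    · rw [Finset.card_erase_of_mem m2, Finset.card_erase_of_mem m1]; simp; omega
    · intro y hy
      simp only [Finset.mem_erase, Finset.mem_Ico] at hy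
      push_cast at hy; omega
    · intro y hy hn
      simp only [Finset.mem_erase, Finset.mem_Ico] at hn
      rw [mem_AA] at hy; push_cast at hn; omega
  · have hn : x + 1 ∉ Finset.Ico 0 x := by simp
    have g := rs_gauss 0 (h - 1)
    rw [zero_add, show ((h - 1 : ℕ) : ℤ) = x by omega] at g
    rw [card_exc h k hh hk x hx1 hx2 (insert (x + 1) (Finset.Ico 0 x)) ?_ ?_ (x + 1)
      (fun _ => rfl) (by omega) (by simp) (by rw [mem_AA]; omega) ?_ ?_]
    · rw [Finset.sum_insert hn]
      subst H
      linarith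
    · intro y hy
      simp only [Finset.mem_insert, Finset.mem_Ico] at hy
      rw [mem_AA]; omega
    · rw [Finset.card_insert_of_notMem hn, Int.card_Ico]; omega
    · intro y hy
      simp only [Finset.mem_insert, Finset.mem_Ico] at hy
      omega
    · intro y hy hn
      simp only [Finset.mem_insert, Finset.mem_Ico] at hn
      rw [mem_AA] at hy; omega
  · rw [card_exc h k hh hk x hx1 hx2 (Finset.Ico 0 x) ?_ ?_ (x - 1)
      (by omega) (fun _ => rfl) (by rw [Finset.mem_Ico]; omega) (by rw [mem_AA]; omega) ?_ ?_]
    · subst H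
      linarith
    · intro y hy
      simp only [Finset.mem_Ico] at hy
      rw [mem_AA]; omega
    · rw [Int.card_Ico]; omega
    · intro y hy
      simp only [Finset.mem_Ico] at hy
      omega
    · intro y hy hn
      simp only [Finset.mem_Ico] at hn
      rw [mem_AA] at hy; omega
  · rw [card_plain h k hh hk x hx1 hx2 (by omega) (by omega)
      (Finset.Ico (0 : ℤ) h) ?_ ?_ h ?_ ?_]
    · linarith
    · intro y hy
      simp only [Finset.mem_Ico] at hy
      rw [mem_AA]; omega
    · simp
    · intro y hy
      simp only [Finset.mem_Ico] at hy
      omega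
    · intro y hy hn
      simp only [Finset.mem_Ico] at hn
      rw [mem_AA] at hy; omega

theorem refl_sub (h k : ℕ) (x : ℤ) :
    (restrictedSumset h (AA k x)).image (fun s : ℤ => (h : ℤ) * (k + 1) - s) ⊆
      restrictedSumset h (AA k (k - 1 - x)) := by
  intro t ht
  obtain ⟨s, hs, rfl⟩ := Finset.mem_image.1 ht
  obtain ⟨S, h1, h2, rfl⟩ := (rs_mem _ _ _).1 hs
  have inj : Function.Injective (fun y : ℤ => (k + 1 : ℤ) - y) := fun a b hab => by
    try simp only at hab; omega
  refine (rs_mem _ _ _).2 ⟨S.image (fun y => (k + 1 : ℤ) - y), ?_, ?_, ?_⟩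
  · intro z hz
    obtain ⟨y, hy, rfl⟩ := Finset.mem_image.1 hz
    have := (mem_AA _ _ _).1 (h1 hy)
    rw [mem_AA]; omega
  · rw [Finset.card_image_of_injective _ inj, h2]
  · rw [Finset.sum_image inj.injOn, Finset.sum_sub_distrib, Finset.sum_const, h2]
    simp

theorem refl_card_le (h k : ℕ) (x : ℤ) :
    (restrictedSumset h (AA k x)).card ≤ (restrictedSumset h (AA k (k - 1 - x))).card := by
  rw [← Finset.card_image_of_injective (f := fun s : ℤ => (h : ℤ) * (k + 1) - s)]
  · exact Finset.card_le_card (refl_sub h k x)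
  · intro a b hab
    try simp only at hab; omega

theorem refl_card (h k : ℕ) (x : ℤ) :
    (restrictedSumset h (AA k x)).card = (restrictedSumset h (AA k (k - 1 - x))).card := by
  refine le_antisymm (refl_card_le h k x) ?_
  have := refl_card_le h k (k - 1 - x)
  rwa [show (k : ℤ) - 1 - (k - 1 - x) = x by ring] at this

theorem stmt_11 (h k : ℕ) (hh : 3 ≤ h) (hk : 3 * h + 3 ≤ k) (x : ℤ)
    (hx : x ∈ Finset.Icc (1 : ℤ) ((k : ℤ) - 2))
    (A : Finset ℤ) (hA : A = Finset.Icc (0 : ℤ) ((k : ℤ) + 1) \ {x, x + 2}) :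
    (x ∈ Finset.Icc (1 : ℤ) ((h : ℤ) - 2) →
      ((restrictedSumset h A).card : ℤ) = (h : ℤ) * k - (h : ℤ) ^ 2 + 2 * x + 2) ∧
    (x ∈ Finset.Icc ((k : ℤ) - h + 1) ((k : ℤ) - 2) →
      ((restrictedSumset h A).card : ℤ) = ((h : ℤ) + 2) * k - (h : ℤ) ^ 2 - 2 * x) ∧
    ((x = (h : ℤ) - 1 ∨ x = (k : ℤ) - h) →
      ((restrictedSumset h A).card : ℤ) = (h : ℤ) * k - (h : ℤ) ^ 2 + 2 * h - 1) ∧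
    ((x = (h : ℤ) ∨ x = (k : ℤ) - h - 1) →
      ((restrictedSumset h A).card : ℤ) = (h : ℤ) * k - (h : ℤ) ^ 2 + 2 * h) ∧
    (x ∈ Finset.Icc ((h : ℤ) + 1) ((k : ℤ) - h - 2) →
      ((restrictedSumset h A).card : ℤ) = (h : ℤ) * k - (h : ℤ) ^ 2 + 2 * h + 1) := by
  have hA' : A = AA k x := hA
  subst hA'
  simp only [Finset.mem_Icc] at hx ⊢
  by_cases hx2 : 2 * x ≤ k - 1
  · obtain ⟨c1, c2, c3, c4⟩ := half h k hh hk x hx.1 hx2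
    refine ⟨fun H => c1 (by omega), fun H => by omega, fun H => c2 (by omega),
      fun H => c3 (by omega), fun H => c4 (by omega)⟩
  · obtain ⟨c1, c2, c3, c4⟩ := half h k hh hk (k - 1 - x) (by omega) (by omega)
    rw [refl_card]
    refine ⟨fun H => by omega, fun H => ?_, fun H => c2 (by omega),
      fun H => c3 (by omega), fun H => c4 (by omega)⟩
    rw [c1 (by omega)]; ring
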